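/- Let d ≥ 2. In ℂ^{d²×d²}, let X = diag(0, …, 0, 1, …, 1) be the diagonal matrix whose first d² − d diagonal entries are 0 and whose last d diagonal entries are 1, and for each real τ > 0 let X̂_τ = diag(τ, 0, …, 0). Define F₁(X̂_τ, X) = (Tr √(√X̂_τ X √X̂_τ))² / (Tr(X̂_τ) Tr(X)) − (Tr(X − X̂_τ))² / d². Then F₁(X̂_τ, X) → −1 as τ → 0⁺; in particular, −1 is a tight (but unattained) lower bound for F₁ on pairs of nonzero positive semidefinite d²×d² matrices with traces at most d. -/

import Mathlib

open Matrix ComplexOrder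

/-- The positive semidefinite square root of a positive semidefinite matrix
(the definition of the older Mathlib, since removed). -/
noncomputable def Matrix.PosSemidef.sqrt {n 𝕜 : Type*} [Fintype n] [RCLike 𝕜] [DecidableEq n]
    {A : Matrix n n 𝕜} (hA : Matrix.PosSemidef A) : Matrix n n 𝕜 :=
  hA.1.eigenvectorUnitary.1 * diagonal ((↑) ∘ Real.sqrt ∘ hA.1.eigenvalues) *
  (star hA.1.eigenvectorUnitary : Matrix n n 𝕜)

/-- The positive semidefinite square root of a matrix (junk value `0` if the matrix is
not positive semidefinite). -/
noncomputable def matSqrt {n : Type*} [Fintype n] [DecidableEq n]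
    (M : Matrix n n ℂ) : Matrix n n ℂ :=
  open scoped Classical in
  if h : M.PosSemidef then h.sqrt else 0

/-- The diagonal `d² × d²` matrix whose first `d² − d` diagonal entries are `0` and whose
last `d` diagonal entries are `1`. -/
def X8 (d : ℕ) : Matrix (Fin (d ^ 2)) (Fin (d ^ 2)) ℂ :=
  Matrix.diagonal fun i => if (i : ℕ) < d ^ 2 - d then 0 else 1

/-- The diagonal `d² × d²` matrix `diag(τ, 0, …, 0)`. -/
def Xhat8 (d : ℕ) (τ : ℝ) : Matrix (Fin (d ^ 2)) (Fin (d ^ 2)) ℂ :=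
  Matrix.diagonal fun i => if (i : ℕ) = 0 then (τ : ℂ) else 0

open Filter Topology

section CorrectedFidelity

variable {n : Type*} [Fintype n] [DecidableEq n]

open scoped MatrixOrder in
theorem matSqrt_eq_cfcSqrt {A : Matrix n n ℂ} (hA : A.PosSemidef) : matSqrt A = CFC.sqrt A := by
  rw [matSqrt, dif_pos hA, CFC.sqrt_eq_real_sqrt A hA.nonneg, cfcₙ_eq_cfc, hA.isHermitian.cfc_eq]
  rfl

open scoped MatrixOrder in
theorem conjTranspose_matSqrt_mul_self {A : Matrix n n ℂ} (hA : A.PosSemidef) :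
    (matSqrt A)ᴴ * matSqrt A = A := by
  rw [matSqrt_eq_cfcSqrt hA, (CFC.sqrt_nonneg A).posSemidef.isHermitian.eq,
    CFC.sqrt_mul_sqrt_self A hA.nonneg]

theorem matSqrt_mul_eq_zero_iff {A : Matrix n n ℂ} (hA : A.PosSemidef) {m : Type*}
    {B : Matrix n m ℂ} : matSqrt A * B = 0 ↔ A * B = 0 := by
  rw [← conjTranspose_mul_self_mul_eq_zero, conjTranspose_matSqrt_mul_self hA]

theorem matSqrt_zero : matSqrt (0 : Matrix n n ℂ) = 0 := by
  rw [← mul_one (matSqrt 0), matSqrt_mul_eq_zero_iff PosSemidef.zero, zero_mul]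

/-- The corrected process fidelity `F₁(A, X)` of an estimate `A` of the process matrix `X`, in which
`Fintype.card n` is the `d²` of `d² × d²` matrices. When `A` or `X` has trace `0`, the first term is
`0` by the convention `x / 0 = 0`. -/
noncomputable def correctedFidelity (A X : Matrix n n ℂ) : ℝ :=
  (matSqrt (matSqrt A * X * matSqrt A)).trace.re ^ 2 / (A.trace.re * X.trace.re)
    - (X - A).trace.re ^ 2 / Fintype.card n

theorem correctedFidelity_eq_of_mul_eq_zero {A X : Matrix n n ℂ} (hA : A.PosSemidef)
    (hAX : A * X = 0) :
    correctedFidelity A X = -((X - A).trace.re ^ 2 / Fintype.card n) := by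
  have hsqrt : matSqrt A * X = 0 := (matSqrt_mul_eq_zero_iff hA).mpr hAX
  simp [correctedFidelity, hsqrt, matSqrt_zero]

theorem tendsto_correctedFidelity_of_mul_eq_zero {ι : Type*} {l : Filter ι}
    {A : ι → Matrix n n ℂ} {X : Matrix n n ℂ} (hA : ∀ᶠ i in l, (A i).PosSemidef)
    (hAX : ∀ᶠ i in l, A i * X = 0) (hlim : Tendsto A l (𝓝 0)) :
    Tendsto (fun i => correctedFidelity (A i) X) l (𝓝 (-(X.trace.re ^ 2 / Fintype.card n))) := by
  have hcont : Continuous fun B : Matrix n n ℂ => -((X - B).trace.re ^ 2 / Fintype.card n) := by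
    fun_prop
  have hsupp := (hcont.tendsto 0).comp hlim
  rw [sub_zero] at hsupp
  refine hsupp.congr' ?_
  filter_upwards [hA, hAX] with i hAi hAXi
  exact (correctedFidelity_eq_of_mul_eq_zero hAi hAXi).symm

end CorrectedFidelity

theorem trace_X8 (d : ℕ) : (X8 d).trace = d := by
  have hle : d ≤ d ^ 2 := Nat.le_self_pow two_ne_zero d
  have hcard : Finset.card {i : Fin (d ^ 2) | ¬(i : ℕ) < d ^ 2 - d} = d := by
    have hsplit := Finset.card_filter_add_card_filter_not (s := Finset.univ)
      fun i : Fin (d ^ 2) => (i : ℕ) < d ^ 2 - d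
    rw [Fin.card_filter_val_lt, Finset.card_univ, Fintype.card_fin] at hsplit
    omega
  rw [X8, trace_diagonal, Finset.sum_ite, Finset.sum_const_zero, zero_add, Finset.sum_const,
    hcard, nsmul_one]

theorem posSemidef_Xhat8 (d : ℕ) {τ : ℝ} (hτ : 0 ≤ τ) : (Xhat8 d τ).PosSemidef := by
  refine PosSemidef.diagonal fun i => ?_
  split_ifs
  exacts [Complex.zero_le_real.mpr hτ, le_rfl]

theorem Xhat8_mul_X8 {d : ℕ} (hd : 2 ≤ d) (τ : ℝ) : Xhat8 d τ * X8 d = 0 := by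
  have hlt : d < d ^ 2 := lt_self_pow₀ hd one_lt_two
  rw [Xhat8, X8, diagonal_mul_diagonal, diagonal_eq_zero]
  ext i
  by_cases hi : (i : ℕ) = 0
  · simp [hi, hlt]
  · simp [hi]

theorem tendsto_Xhat8_nhds_zero (d : ℕ) : Tendsto (Xhat8 d) (𝓝 0) (𝓝 0) := by
  have hcont : Continuous (Xhat8 d) := by
    refine Continuous.matrix_diagonal (continuous_pi fun i => ?_)
    split_ifs <;> fun_prop
  have hzero : Xhat8 d 0 = 0 := by simp [Xhat8]
  exact hzero ▸ hcont.tendsto 0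

/-- For `d ≥ 2`, `X = diag(0,…,0,1,…,1)` (last `d` entries one) and `X̂_τ = diag(τ,0,…,0)`,
the corrected process fidelity
`F₁(X̂_τ, X) = (Tr √(√X̂_τ X √X̂_τ))² / (Tr(X̂_τ) Tr(X)) − (Tr(X − X̂_τ))² / d²`
tends to `−1` as `τ → 0⁺`: the lower bound `−1` of `F₁` is tight but unattained. -/
theorem stmt8 (d : ℕ) (hd : 2 ≤ d) :
    Filter.Tendsto
      (fun τ : ℝ =>
        ((matSqrt (matSqrt (Xhat8 d τ) * X8 d * matSqrt (Xhat8 d τ))).trace.re) ^ 2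
            / ((Xhat8 d τ).trace.re * (X8 d).trace.re)
          - ((X8 d - Xhat8 d τ).trace.re) ^ 2 / (d : ℝ) ^ 2)
      (nhdsWithin 0 (Set.Ioi 0)) (nhds (-1)) := by
  have hd₀ : (d : ℝ) ^ 2 ≠ 0 := by positivity
  have hpos : ∀ᶠ τ in 𝓝[>] (0 : ℝ), (Xhat8 d τ).PosSemidef :=
    eventually_mem_nhdsWithin.mono fun _ hτ => posSemidef_Xhat8 d (le_of_lt hτ)
  have hzero : Tendsto (Xhat8 d) (𝓝[>] 0) (𝓝 0) :=
    (tendsto_Xhat8_nhds_zero d).mono_left nhdsWithin_le_nhds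
  have hlim := tendsto_correctedFidelity_of_mul_eq_zero hpos
    (Eventually.of_forall (Xhat8_mul_X8 hd)) hzero
  simpa only [correctedFidelity, trace_X8, Complex.natCast_re, Fintype.card_fin, Nat.cast_pow,
    div_self hd₀] using hlim
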